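/- arXiv:2005.07113 — 6 statements merged into one kernel-verified Lean document; each statement's English description precedes it below -/
import Mathlib

section
/- Let F be a field, C an [n,k] linear code over F, N ≥ n an integer, and S = {s_0 < s_1 < ⋯ < s_{n−1}} ⊆ {0,…,N−1} a placement set with s_0 = 0 and s_{n−1} = N−1, and let a ≤ b ≤ τ be positive integers. Then the packet-level code SDE(C,S) is an (a,b,τ) streaming code if and only if both of the following hold: (1) random erasure recovery: for every i ∈ {0,…,n−1} and every A ⊆ {i,…,r_i} with i ∈ A and |A| ≤ a, any two codewords c, c′ ∈ C satisfying c_j = c′_j for all j < i and for all j ∈ {i,…,r_i} \ A also satisfy c_i = c′_i; and (2) burst erasure recovery: for every i ∈ {0,…,n−1} and every B ⊆ {s_i,…,min(s_i+b−1, N−1)} with s_i ∈ B, any two codewords c, c′ ∈ C satisfying c_j = c′_j for all j < i and for all j ∈ {i,…,r_i} \ f_S(B) also satisfy c_i = c′_i. -/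
/-!
Time `t` of a packet stream is made of one coordinate from each of the diagonals through it, and
the diagonals of a stream in `SDE(C, S)` are independent codewords: any two codewords extend to two
streams that differ on a single diagonal. Hence the packet at time `t` is determined by the packets
received at a set `J` of times if and only if, for every `i`, coordinate `i` of the base code is
determined by the coordinates `j` that the diagonal through coordinate `i` of time `t` places in
`J`. For the `J` left by an erasure pattern `E` in the decoding window these coordinates are all `j
< i` and the unerased `j ∈ {i, …, r_i}`. Placement turns patterns `A` of erased coordinates into
patterns `E` of erased times and back, preserving cardinalities and bursts; and since `f_S ∘ s =
id`, erasing `f_S(B)` for bursts `B` of slots is the same as erasing sets of coordinates whose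
slots lie in a burst.
-/

section

variable {ι : Type*} {α : ι → Type*}

/-- Coordinate `i` of a word of the code `C` can be recovered from its coordinates in `J`. A
packet-level code is a code whose coordinates are the times. -/
def Determines (C : Set (∀ i, α i)) (J : Set ι) (i : ι) : Prop :=
  ∀ c ∈ C, ∀ c' ∈ C, (∀ j ∈ J, c j = c' j) → c i = c' i

/-- The packet-level code `SDE(C, S)` over an arbitrary type of times: the streams whose staggered
diagonals are codewords. The placement set `S` is given by its enumeration `δ`. -/
def sde {T : Type*} [Add T] (C : Set (∀ i, α i)) (δ : ι → T) : Set (T → ∀ i, α i) :=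
  {x | ∀ s, (fun i => x (s + δ i) i) ∈ C}

/-- `(a, b, τ)` streaming codes: each packet is recovered with delay `τ` if its decoding window
`{t, …, t + τ}` has at most `a` erasures or a burst of length at most `b`. -/
def IsStreamingCode {P : Type*} (X : Set (ℤ → P)) (a b τ : ℕ) : Prop :=
  ∀ (t : ℤ) (E : Finset ℤ), ↑E ⊆ Set.Icc t (t + τ) → t ∈ E →
    (E.card ≤ a ∨ ∀ e ∈ E, e ≤ t + b - 1) →
    Determines X (Set.Iio t ∪ Set.Icc t (t + τ) \ ↑E) t

/-- Random erasure recovery of a base code, `r i` being the last coordinate that is available for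
decoding coordinate `i`. -/
def RecoversRandomErasures [Preorder ι] (C : Set (∀ i, α i)) (r : ι → ι) (a : ℕ) : Prop :=
  ∀ (i : ι) (A : Finset ι), ↑A ⊆ Set.Icc i (r i) → i ∈ A → A.card ≤ a →
    Determines C (Set.Iio i ∪ Set.Icc i (r i) \ ↑A) i

/-- Burst erasure recovery of a base code with placement `σ`, where `f` plays the role of `f_S`
and `L` is the last slot `N - 1`. For `b = 0` and `σ i = 0` the truncated `σ i + b - 1` still admits
the burst `{0}`. -/
def RecoversBurstErasures [Preorder ι] (C : Set (∀ i, α i)) (σ : ι → ℕ) (f : ℕ → ι) (r : ι → ι)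
    (L b : ℕ) : Prop :=
  ∀ (i : ι) (B : Finset ℕ), ↑B ⊆ Set.Icc (σ i) (min (σ i + b - 1) L) → σ i ∈ B →
    Determines C (Set.Iio i ∪ Set.Icc i (r i) \ f '' ↑B) i

theorem determines_sde_iff {T : Type*} [AddGroup T] {C : Set (∀ i, α i)} {δ : ι → T} {J : Set T}
    {t : T} :
    Determines (sde C δ) J t ↔ ∀ i, Determines C {j | t - δ i + δ j ∈ J} i := by
  classical
  constructor
  · intro h i c hc c' hc' hcc'
    let x : T → ∀ j, α j := fun _ => c
    let y : T → ∀ j, α j := fun u j => if u = t - δ i + δ j then c' j else c j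
    have hx : x ∈ sde C δ := fun _ => hc
    have hy : y ∈ sde C δ := fun s => by
      by_cases hs : s = t - δ i <;> simp [y, hs, hc, hc']
    have hxy : ∀ u ∈ J, x u = y u := fun u hu => funext fun j => by
      by_cases huj : u = t - δ i + δ j
      · simpa [x, y, huj] using hcc' j (by rwa [huj] at hu)
      · simp [x, y, huj]
    simpa [x, y] using congrFun (h x hx y hy hxy) i
  · intro h x hx y hy hxy
    funext i
    simpa using h i _ (hx (t - δ i)) _ (hy (t - δ i)) fun j hj => congrFun (hxy _ hj) j

variable [LinearOrder ι] {C : Set (∀ i, α i)} {σ : ι → ℕ} {f : ℕ → ι} {r : ι → ι} {a b τ L : ℕ}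

theorem setOf_diagonal_mem_available_eq (hσ : StrictMono σ)
    (hr : ∀ i j, j ≤ r i ↔ σ j ≤ σ i + τ) (t : ℤ) (E : Set ℤ) (i : ι) :
    {j | t - σ i + σ j ∈ Set.Iio t ∪ Set.Icc t (t + τ) \ E} =
      Set.Iio i ∪ Set.Icc i (r i) \ {j | t - σ i + σ j ∈ E} := by
  ext j
  have before : t - σ i + σ j < t ↔ j < i := by rw [← hσ.lt_iff_lt]; omega
  have after : t ≤ t - σ i + σ j ↔ i ≤ j := by rw [← hσ.le_iff_le]; omega
  have within : t - σ i + σ j ≤ t + τ ↔ j ≤ r i := by rw [hr]; omega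
  simp [before, after, within]

theorem IsStreamingCode.determines (hσ : StrictMono σ) (hr : ∀ i j, j ≤ r i ↔ σ j ≤ σ i + τ)
    (h : IsStreamingCode (sde C fun i => (σ i : ℤ)) a b τ) {i : ι} {A : Finset ι}
    (hA : ↑A ⊆ Set.Icc i (r i)) (hi : i ∈ A) (hAab : A.card ≤ a ∨ ∀ j ∈ A, σ j < σ i + b) :
    Determines C (Set.Iio i ∪ Set.Icc i (r i) \ ↑A) i := by
  let place : ι ↪ ℤ := ⟨fun j => σ j, Nat.cast_injective.comp hσ.injective⟩
  have hwindow : ↑(A.map place) ⊆ Set.Icc (σ i : ℤ) (σ i + τ) := by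
    rw [Finset.coe_map, Set.image_subset_iff]
    intro j hj
    have hle := hσ.monotone (hA hj).1
    have hdelay := (hr i j).1 (hA hj).2
    simp only [place, Function.Embedding.coeFn_mk, Set.mem_preimage, Set.mem_Icc]
    omega
  have hpattern : (A.map place).card ≤ a ∨ ∀ e ∈ A.map place, e ≤ σ i + (b : ℤ) - 1 := by
    refine hAab.imp (by simp) fun hburst => ?_
    simp only [Finset.forall_mem_map, place, Function.Embedding.coeFn_mk]
    intro j hj
    have := hburst j hj
    omega
  have herased : {j | (σ i : ℤ) - σ i + σ j ∈ (A.map place : Set ℤ)} = A := by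
    ext j
    simp [place, hσ.injective.eq_iff]
  have hdiagonal := determines_sde_iff.1
    (h (σ i) (A.map place) hwindow (Finset.mem_map_of_mem place hi) hpattern) i
  rwa [setOf_diagonal_mem_available_eq hσ hr, herased] at hdiagonal

theorem isStreamingCode_sde_of_determines (hσ : StrictMono σ)
    (hr : ∀ i j, j ≤ r i ↔ σ j ≤ σ i + τ)
    (h : ∀ (i : ι) (A : Finset ι), ↑A ⊆ Set.Icc i (r i) → i ∈ A →
      (A.card ≤ a ∨ ∀ j ∈ A, σ j < σ i + b) →
      Determines C (Set.Iio i ∪ Set.Icc i (r i) \ ↑A) i) :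
    IsStreamingCode (sde C fun i => (σ i : ℤ)) a b τ := by
  intro t E hE ht hEab
  refine determines_sde_iff.2 fun i => ?_
  rw [setOf_diagonal_mem_available_eq hσ hr]
  have hinj : Function.Injective fun j => t - (σ i : ℤ) + σ j :=
    (add_right_injective _).comp (Nat.cast_injective.comp hσ.injective)
  let A := E.preimage _ hinj.injOn
  have hA : ↑A ⊆ Set.Icc i (r i) := by
    intro j hj
    have hj' := hE (Finset.mem_preimage.1 hj)
    rw [Set.mem_Icc] at hj'
    rw [Set.mem_Icc, ← hσ.le_iff_le, hr]
    omega
  have hi : i ∈ A := Finset.mem_preimage.2 (by simpa using ht)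
  have hpattern : A.card ≤ a ∨ ∀ j ∈ A, σ j < σ i + b := by
    refine hEab.imp (fun hcard => ?_) fun hburst j hj => ?_
    · exact (Finset.card_le_card_of_injOn _ (fun j hj => Finset.mem_preimage.1 hj)
        hinj.injOn).trans hcard
    · have := hburst _ (Finset.mem_preimage.1 hj)
      omega
  simpa [A, Set.preimage] using h i A hA hi hpattern

theorem isStreamingCode_sde_iff (hσ : StrictMono σ) (hr : ∀ i j, j ≤ r i ↔ σ j ≤ σ i + τ) :
    IsStreamingCode (sde C fun i => (σ i : ℤ)) a b τ ↔
      ∀ (i : ι) (A : Finset ι), ↑A ⊆ Set.Icc i (r i) → i ∈ A →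
        (A.card ≤ a ∨ ∀ j ∈ A, σ j < σ i + b) →
        Determines C (Set.Iio i ∪ Set.Icc i (r i) \ ↑A) i :=
  ⟨fun h _ _ => h.determines hσ hr, isStreamingCode_sde_of_determines hσ hr⟩

theorem recoversBurstErasures_iff (hσ : StrictMono σ) (hL : ∀ i, σ i ≤ L)
    (gc : GaloisConnection σ f) (hr : ∀ i, i ≤ r i) (hb : 0 < b) :
    RecoversBurstErasures C σ f r L b ↔
      ∀ (i : ι) (A : Finset ι), ↑A ⊆ Set.Icc i (r i) → i ∈ A → (∀ j ∈ A, σ j < σ i + b) →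
        Determines C (Set.Iio i ∪ Set.Icc i (r i) \ ↑A) i := by
  have hfσ : Function.LeftInverse f σ := fun i => hσ.injective (gc.l_u_l_eq_l i)
  constructor
  · intro h i A hA hi hburst
    have hB : ↑(A.image σ) ⊆ Set.Icc (σ i) (min (σ i + b - 1) L) := by
      rw [Finset.coe_image, Set.image_subset_iff]
      intro j hj
      have := hburst j hj
      exact ⟨hσ.monotone (hA hj).1, le_min (by omega) (hL j)⟩
    simpa only [Finset.coe_image, hfσ.image_image] using
      h i (A.image σ) hB (Finset.mem_image_of_mem σ hi)
  · intro h i B hB hi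
    let A := (B.image f).filter (· ≤ r i)
    have hA : ↑A ⊆ Set.Icc i (r i) := by
      intro j hj
      simp only [A, Finset.coe_filter, Finset.mem_image, Set.mem_ofPred_eq] at hj
      obtain ⟨⟨m, hm, rfl⟩, hj⟩ := hj
      exact ⟨gc.le_u (hB hm).1, hj⟩
    have hiA : i ∈ A :=
      Finset.mem_filter.2 ⟨Finset.mem_image.2 ⟨σ i, hi, hfσ i⟩, hr i⟩
    have hburst : ∀ j ∈ A, σ j < σ i + b := by
      intro j hj
      obtain ⟨m, hm, rfl⟩ := Finset.mem_image.1 (Finset.mem_filter.1 hj).1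
      have hfm : σ (f m) ≤ m := gc.l_u_le m
      have hmb : m ≤ σ i + b - 1 := (hB hm).2.trans (min_le_left _ _)
      omega
    have hsdiff : Set.Icc i (r i) \ f '' ↑B = Set.Icc i (r i) \ ↑A := by
      ext j
      exact and_congr_right fun hj => by simp [A, hj.2.not_gt]
    exact hsdiff ▸ h i A hA hiA hburst

theorem sde_streaming_code_iff_general (hσ : StrictMono σ) (hL : ∀ i, σ i ≤ L)
    (gc : GaloisConnection σ f) (hr : ∀ i, r i = f (min (σ i + τ) L)) (hb : 0 < b) :
    IsStreamingCode (sde C fun i => (σ i : ℤ)) a b τ ↔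
      RecoversRandomErasures C r a ∧ RecoversBurstErasures C σ f r L b := by
  have hr' : ∀ i j, j ≤ r i ↔ σ j ≤ σ i + τ := fun i j => by
    rw [hr, ← gc.le_iff_le, le_min_iff, and_iff_left (hL j)]
  have hr_self : ∀ i, i ≤ r i := fun i => (hr' i i).2 (Nat.le_add_right _ _)
  simp only [isStreamingCode_sde_iff hσ hr', recoversBurstErasures_iff hσ hL gc hr_self hb,
    RecoversRandomErasures, or_imp, forall_and]

end

/-- Necessary and sufficient conditions for SDE(C,S) to be an
(a,b,τ) streaming code. -/
theorem sde_streaming_code_iff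
    (F : Type*) [Field F] (n k N a b τ : ℕ)
    (hn : 0 < n) (hnN : n ≤ N)
    (ha : 0 < a) (hab : a ≤ b) (hbτ : b ≤ τ)
    (C : Submodule F (Fin n → F)) (hk : Module.finrank F C = k)
    (σ : Fin n → ℕ) (hσmono : StrictMono σ)
    (hσrange : ∀ i, σ i ≤ N - 1)
    (hσ0 : σ ⟨0, hn⟩ = 0) (hσlast : σ ⟨n - 1, by omega⟩ = N - 1)
    (fS : ℕ → Fin n)
    (hfS : ∀ j : ℕ, σ (fS j) ≤ j ∧ ∀ i : Fin n, σ i ≤ j → i ≤ fS j)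
    (r : Fin n → Fin n)
    (hr : ∀ i, r i = fS (min (σ i + τ) (N - 1))) :
    -- SDE(C,S) is an (a,b,τ) streaming code
    (∀ (t : ℤ) (E : Finset ℤ), (↑E ⊆ Set.Icc t (t + (τ : ℤ))) → t ∈ E →
        (E.card ≤ a ∨ ∀ e ∈ E, e ≤ t + (b : ℤ) - 1) →
        ∀ x y : ℤ → Fin n → F,
          (∀ s : ℤ, (fun i => x (s + (σ i : ℤ)) i) ∈ C) →
          (∀ s : ℤ, (fun i => y (s + (σ i : ℤ)) i) ∈ C) →
          (∀ t' : ℤ, t' < t → x t' = y t') →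
          (∀ t' : ℤ, t' ∈ Set.Icc t (t + (τ : ℤ)) → t' ∉ E → x t' = y t') →
          x t = y t)
    ↔
    -- (1) random erasure recovery
    ((∀ (i : Fin n) (A : Finset (Fin n)),
        A ⊆ Finset.Icc i (r i) → i ∈ A → A.card ≤ a →
        ∀ c ∈ C, ∀ c' ∈ C,
          (∀ j : Fin n, j < i → c j = c' j) →
          (∀ j ∈ Finset.Icc i (r i) \ A, c j = c' j) →
          c i = c' i)
     ∧
    -- (2) burst erasure recovery
     (∀ (i : Fin n) (B : Finset ℕ),
        B ⊆ Finset.Icc (σ i) (min (σ i + b - 1) (N - 1)) → σ i ∈ B →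
        ∀ c ∈ C, ∀ c' ∈ C,
          (∀ j : Fin n, j < i → c j = c' j) →
          (∀ j ∈ Finset.Icc i (r i) \ (B.image fS), c j = c' j) →
          c i = c' i)) := by
  have gc : GaloisConnection σ fS := fun i j =>
    ⟨(hfS j).2 i, fun h => (hσmono.monotone h).trans (hfS j).1⟩
  simpa [IsStreamingCode, RecoversRandomErasures, RecoversBurstErasures, Determines, sde, or_imp,
    forall_and, imp_forall_iff (α := ℤ → Fin n → F), ← Finset.coe_subset] using
    sde_streaming_code_iff_general (C := (C : Set (Fin n → F))) (a := a) hσmono hσrange gc hr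
      (ha.trans_le hab)
end

section
/- Let Z = (z_{ij}) be a k×n matrix of rank k over a field F, with 1 ≤ k ≤ n, whose row space is an [n,k] MDS code, i.e., every nonzero vector in the row space of Z has Hamming weight at least n−k+1. Suppose z_{ij} = 0 whenever j ≡ i+s (mod n) for some s ∈ {1,…,k−1}. Then z_{ij} ≠ 0 for every pair (i,j) such that j is not congruent to i+s (mod n) for any s ∈ {1,…,k−1}. -/
open scoped Classical

/-! A nonzero codeword has at least `n - k + 1` nonzero entries, hence at most `k - 1` zeros. The
rows are nonzero because the rank is full, and the band already accounts for `k - 1` zeros in each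
of them, so a row can have no zero outside the band. -/

section HammingNorm

variable {ι : Type*} [Fintype ι] {β : ι → Type*} [∀ i, DecidableEq (β i)] [∀ i, Zero (β i)]
  {v : ∀ i, β i} {S : Finset ι}

theorem hammingNorm_add_card_le_of_forall_eq_zero (hS : ∀ i ∈ S, v i = 0) :
    hammingNorm v + S.card ≤ Fintype.card ι := by
  have hdisj : Disjoint (Finset.univ.filter fun i => v i ≠ 0) S :=
    Finset.disjoint_left.mpr fun i hi hiS => (Finset.mem_filter.mp hi).2 (hS i hiS)
  rw [hammingNorm, ← Finset.card_union_of_disjoint hdisj]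
  exact Finset.card_le_univ _

theorem ne_zero_of_card_le_hammingNorm_add_card (hS : ∀ i ∈ S, v i = 0)
    (hcard : Fintype.card ι ≤ hammingNorm v + S.card) {i : ι} (hi : i ∉ S) : v i ≠ 0 := by
  intro hvi
  have hzero : ∀ l ∈ S.cons i hi, v l = 0 := (Finset.forall_mem_cons hi _).mpr ⟨hvi, hS⟩
  have hbound := hammingNorm_add_card_le_of_forall_eq_zero hzero
  rw [Finset.card_cons] at hbound
  omega

end HammingNorm

/-- The `d` cyclically consecutive positions `a + 1, …, a + d` modulo `n`, in which row `a` of a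
zero-band matrix vanishes when `d = k - 1`. The positions are columns `Fin n`, while `a` is a
natural number so that no embedding of row indices into column indices is needed. -/
noncomputable def cyclicBand (n a d : ℕ) : Finset (Fin n) :=
  Finset.univ.filter fun j => ∃ s : ℕ, 1 ≤ s ∧ s ≤ d ∧ (j : ℕ) = (a + s) % n

theorem mem_cyclicBand {n a d : ℕ} {j : Fin n} :
    j ∈ cyclicBand n a d ↔ ∃ s : ℕ, 1 ≤ s ∧ s ≤ d ∧ (j : ℕ) = (a + s) % n :=
  Finset.mem_filter_univ j

theorem map_val_cyclicBand {n d : ℕ} (hd : d ≤ n) (a : ℕ) :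
    (cyclicBand n a d).map Fin.valEmbedding =
      (Finset.Ico (a + 1) (a + 1 + d)).image (· % n) := by
  ext x
  simp only [Finset.mem_map, mem_cyclicBand, Fin.valEmbedding_apply, Finset.mem_image,
    Finset.mem_Ico]
  constructor
  · rintro ⟨j, ⟨s, hs, hsd, hj⟩, rfl⟩
    exact ⟨a + s, by omega, hj.symm⟩
  · rintro ⟨t, ht, rfl⟩
    refine ⟨⟨t % n, Nat.mod_lt t (by omega)⟩, ⟨t - a, by omega, by omega, ?_⟩, rfl⟩
    rw [Nat.add_sub_cancel' (by omega)]

theorem card_cyclicBand {n d : ℕ} (hd : d ≤ n) (a : ℕ) : (cyclicBand n a d).card = d := by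
  have hinj : Set.InjOn (· % n) (Finset.Ico (a + 1) (a + 1 + d) : Set ℕ) :=
    (Nat.mod_injOn_Ico (a + 1) n).mono <|
      Finset.coe_subset.mpr <| Finset.Ico_subset_Ico_right <| Nat.add_le_add_left hd _
  rw [← Finset.card_map Fin.valEmbedding, map_val_cyclicBand hd, Finset.card_image_of_injOn hinj,
    Nat.card_Ico, Nat.add_sub_cancel_left]

theorem row_ne_zero_of_rank_eq_card {R m n : Type*} [CommSemiring R] [StrongRankCondition R]
    [Fintype m] [Fintype n] {A : Matrix m n R} (hA : A.rank = Fintype.card m) (i : m) :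
    A i ≠ 0 := by
  intro hi
  have hsupp : Function.support A.row ⊆ Finset.univ.erase i := fun l hl =>
    Finset.mem_erase_of_ne_of_mem (fun hli => hl (hli ▸ hi)) (Finset.mem_univ l)
  have hrank : A.rank ≤ (Finset.univ.erase i).card := A.rank_le_card_of_support_subset _ hsupp
  exact (hA ▸ hrank).not_gt (Finset.card_erase_lt_of_mem (Finset.mem_univ i))

theorem zero_band_MDS_entries_nonzero_general {R : Type*} [Zero R] [DecidableEq R] {m k n : ℕ}
    (hkn : k ≤ n) (Z : Matrix (Fin m) (Fin n) R)
    (hweight : ∀ i, n - k + 1 ≤ hammingNorm (Z i))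
    (hband : ∀ (i : Fin m) (j : Fin n),
      (∃ s : ℕ, 1 ≤ s ∧ s ≤ k - 1 ∧ (j : ℕ) = ((i : ℕ) + s) % n) → Z i j = 0)
    (i : Fin m) (j : Fin n)
    (hj : ¬ ∃ s : ℕ, 1 ≤ s ∧ s ≤ k - 1 ∧ (j : ℕ) = ((i : ℕ) + s) % n) : Z i j ≠ 0 := by
  have hzero : ∀ l ∈ cyclicBand n i (k - 1), Z i l = 0 :=
    fun l hl => hband i l (mem_cyclicBand.mp hl)
  have hcard : Fintype.card (Fin n) ≤ hammingNorm (Z i) + (cyclicBand n i (k - 1)).card := by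
    have hrow := hweight i
    rw [Fintype.card_fin, card_cyclicBand (by omega)]
    omega
  exact ne_zero_of_card_le_hammingNorm_add_card hzero hcard (mt mem_cyclicBand.mp hj)

/-- In a zero-band generator matrix of an `[n,k]` MDS code, every
entry outside the prescribed zero band is nonzero. -/
theorem zero_band_MDS_entries_nonzero
    (F : Type*) [Field F] (k n : ℕ) (hk : 1 ≤ k) (hkn : k ≤ n)
    (Z : Matrix (Fin k) (Fin n) F)
    (hrank : Z.rank = k)
    (hMDS : ∀ v : Fin n → F, v ∈ Submodule.span F (Set.range Z) → v ≠ 0 →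
        n - k + 1 ≤ (Finset.univ.filter (fun j : Fin n => v j ≠ 0)).card)
    (hband : ∀ (i : Fin k) (j : Fin n),
        (∃ s : ℕ, 1 ≤ s ∧ s ≤ k - 1 ∧ (j : ℕ) = ((i : ℕ) + s) % n) → Z i j = 0) :
    ∀ (i : Fin k) (j : Fin n),
      (¬ ∃ s : ℕ, 1 ≤ s ∧ s ≤ k - 1 ∧ (j : ℕ) = ((i : ℕ) + s) % n) → Z i j ≠ 0 := by
  have hrow (i : Fin k) : Z i ≠ 0 :=
    row_ne_zero_of_rank_eq_card (hrank.trans (Fintype.card_fin k).symm) i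
  exact zero_band_MDS_entries_nonzero_general hkn Z
    (fun i => hMDS (Z i) (Submodule.subset_span (Set.mem_range_self i)) (hrow i)) hband
end

section
/- For all integers 1 ≤ k ≤ n and every finite field F with |F| ≥ n, there exists a k×n matrix Z = (z_{ij}) over F such that (i) z_{ij} = 0 whenever j ≡ i+s (mod n) for some s ∈ {1,…,k−1}, and (ii) every set of k columns of Z is linearly independent (equivalently, every k×k column-submatrix of Z is invertible). That is, a k×n zero-band MDS generator matrix exists over F whenever |F| ≥ n. -/
/-!
Fix distinct points `a₀, …, aₙ₋₁` of `F`, with indices read modulo `n`, and let row `i` of `Z` list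
the values at these points of `Pᵢ = ∏ (X - aₜ)`, where `t` runs over the window
`i + 1, …, i + k - 1`. The zero band is then built in. A linear relation among `k` columns is a
combination `φ` of point evaluations that kills `P₀, …, Pₖ₋₁`. Neighbouring windows differ in a
single root, so the difference of their polynomials is a nonzero multiple of the polynomial of their
intersection; hence `φ` kills the polynomials of shorter and shorter windows, in particular a
Newton basis of the polynomials of degree less than `k`. Applying `φ` to the polynomial that
vanishes at all but one of the `k` points shows that the relation is trivial.
-/

section

open Polynomial Lagrange Finset

variable {R M ι : Type*} [CommRing R] [AddCommGroup M] [Module R M]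

theorem nodal_insert_sub_nodal_insert [DecidableEq ι] {s : Finset ι} {i j : ι} (hi : i ∉ s)
    (hj : j ∉ s) (v : ι → R) :
    nodal (insert i s) v - nodal (insert j s) v = (v j - v i) • nodal s v := by
  rw [nodal_insert_eq_nodal hi, nodal_insert_eq_nodal hj, smul_eq_C_mul, C_sub]
  ring

theorem apply_nodal_Ico_eq_zero_of_le {x : ℕ → R} {d e : ℕ} (φ : R[X] →ₗ[R] M)
    (hx : ∀ a b, a < b → b ≤ a + d → IsSMulRegular M (x b - x a))
    (hφ : ∀ p ≤ d, φ (nodal (Ico p (p + d)) x) = 0) (hed : e ≤ d) :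
    ∀ p ∈ Icc (d - e) d, φ (nodal (Ico p (p + e)) x) = 0 := by
  induction hed using Nat.decreasingInduction with
  | self => exact fun p hp ↦ hφ p (mem_Icc.1 hp).2
  | of_succ e he ih =>
    intro p hp
    rw [mem_Icc] at hp
    obtain ⟨r, rfl⟩ : ∃ r, p = r + 1 := Nat.exists_eq_add_one.2 (by lia)
    have hleft : φ (nodal (insert r (Ico (r + 1) (r + 1 + e))) x) = 0 := by
      rw [insert_Ico_add_one_left_eq_Ico (by lia), add_assoc, add_comm 1 e]
      exact ih r (mem_Icc.2 (by lia))
    have hright : φ (nodal (insert (r + 1 + e) (Ico (r + 1) (r + 1 + e))) x) = 0 := by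
      rw [insert_Ico_right_eq_Ico_add_one (by lia)]
      exact ih (r + 1) (mem_Icc.2 (by lia))
    refine (hx r (r + 1 + e) (by lia) (by lia)).right_eq_zero_of_smul ?_
    rw [← map_smul, ← nodal_insert_sub_nodal_insert (by simp) (by simp), map_sub, hleft, hright,
      sub_zero]

/-- The Newton polynomials `∏ t < e, (X - x (p + t))` of the nodes `x p, x (p + 1), …`, bundled as
a sequence so that they are known to span the polynomials of bounded degree. -/
noncomputable def newtonSequence [Nontrivial R] (x : ℕ → R) (p : ℕ) : Polynomial.Sequence R where
  elems' e := nodal (Ico p (p + e)) x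
  degree_eq' e := by simp [degree_nodal]

theorem degreeLE_le_ker_of_apply_nodal_Ico_eq_zero {x : ℕ → R} {d : ℕ} (φ : R[X] →ₗ[R] M)
    (hx : ∀ a b, a < b → b ≤ a + d → IsSMulRegular M (x b - x a))
    (hφ : ∀ p ≤ d, φ (nodal (Ico p (p + d)) x) = 0) :
    degreeLE R d ≤ LinearMap.ker φ := by
  nontriviality R
  have hmonic (e : ℕ) : (newtonSequence x d e).Monic := nodal_monic (s := Ico d (d + e)) (v := x)
  rw [← (newtonSequence x d).span_degreeLE fun e _ ↦ (hmonic e).symm ▸ isUnit_one,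
    Submodule.span_le]
  rintro _ ⟨e, he, rfl⟩
  exact apply_nodal_Ico_eq_zero_of_le φ hx hφ he d (mem_Icc.2 ⟨d.sub_le e, le_rfl⟩)

theorem eq_zero_of_degreeLE_le_ker_sum_smul_leval [Fintype ι] {b : ι → R} {g : ι → R} {d : ℕ}
    (hb : Pairwise fun i j ↦ IsRegular (b i - b j)) (hd : Fintype.card ι ≤ d + 1)
    (hg : degreeLE R d ≤ LinearMap.ker (∑ j, g j • leval (b j))) : g = 0 := by
  classical
  nontriviality R
  funext j
  set q := nodal (univ.erase j) b
  have hq : q ∈ degreeLE R d := by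
    rw [mem_degreeLE, degree_nodal, card_erase_of_mem (mem_univ j), card_univ]
    exact_mod_cast Nat.sub_le_iff_le_add.2 hd
  have hsum : ∑ l, g l * q.eval (b l) = 0 := by simpa using hg hq
  have hroot : ∀ l ≠ j, q.eval (b l) = 0 := fun l hl ↦
    eval_nodal_at_node (mem_erase.2 ⟨hl, mem_univ l⟩)
  rw [Fintype.sum_eq_single j fun l hl ↦ by rw [hroot l hl, mul_zero]] at hsum
  have hreg : IsRegular (q.eval (b j)) := by
    rw [eval_nodal]
    exact IsRegular.prod fun l hl ↦ hb (ne_of_mem_erase hl).symm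
  exact hreg.right.mul_right_eq_zero_iff.1 hsum

theorem linearIndependent_eval_nodal_Ico [Fintype ι] {x : ℕ → R} {b : ι → R} {k : ℕ}
    (hx : ∀ s t, s < t → t < s + k → IsRegular (x t - x s))
    (hb : Pairwise fun i j ↦ IsRegular (b i - b j)) (hk : Fintype.card ι ≤ k) :
    LinearIndependent R fun j (i : Fin k) ↦ (nodal (Ico (i : ℕ) (i + (k - 1))) x).eval (b j) := by
  obtain _ | d := k
  · have := Fintype.card_eq_zero_iff.1 (Nat.le_zero.1 hk)
    exact linearIndependent_empty_type
  rw [Fintype.linearIndependent_iff]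
  intro g hg
  refine congrFun (eq_zero_of_degreeLE_le_ker_sum_smul_leval hb hk ?_)
  refine degreeLE_le_ker_of_apply_nodal_Ico_eq_zero _
    (fun s t hst ht ↦ (hx s t hst (by lia)).left.isSMulRegular) fun p hp ↦ ?_
  simpa using congrFun hg ⟨p, by lia⟩

/-- The `k × n` zero-band matrix on the points `a`: row `i` evaluates at all points the monic
polynomial with roots `a (i + 1), …, a (i + k - 1)`, indices being read modulo `n`. The sequence of
roots is shifted by one so that row `i` uses its entries from position `i` on. -/
noncomputable def zeroBandMatrix {n : ℕ} [NeZero n] (a : Fin n → R) (k : ℕ) :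
    Matrix (Fin k) (Fin n) R :=
  .of fun i j ↦ (nodal (Ico (i : ℕ) (i + (k - 1))) fun t ↦ a (Fin.ofNat n (t + 1))).eval (a j)

theorem zeroBandMatrix_apply_eq_zero {n k s : ℕ} [NeZero n] (a : Fin n → R) {i : Fin k} {j : Fin n}
    (hs : 1 ≤ s) (hsk : s ≤ k - 1) (hj : (j : ℕ) = (i + s) % n) : zeroBandMatrix a k i j = 0 := by
  obtain rfl : j = Fin.ofNat n (i + (s - 1) + 1) :=
    Fin.ext (by rw [hj, Fin.val_ofNat, add_assoc, Nat.sub_add_cancel hs])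
  exact eval_nodal_at_node (v := fun t ↦ a (Fin.ofNat n (t + 1))) (mem_Ico.2 (by lia))

theorem linearIndependent_zeroBandMatrix_col {n k : ℕ} [NeZero n] {a : Fin n → R}
    (ha : Pairwise fun i j ↦ IsRegular (a i - a j)) {cols : Finset (Fin n)} (hcols : #cols = k) :
    LinearIndependent R fun (j : cols) u ↦ zeroBandMatrix a k u j := by
  have hkn : k ≤ n := by simpa [hcols] using card_le_univ cols
  refine linearIndependent_eval_nodal_Ico (fun s t hst hts ↦ ha fun h ↦ ?_)
    (fun i j hij ↦ ha (Subtype.coe_injective.ne hij)) (by simp [hcols])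
  have hmod : s + 1 ≡ t + 1 [MOD n] := (congrArg Fin.val h).symm
  have hdvd : n ∣ t + 1 - (s + 1) := (Nat.modEq_iff_dvd' (by lia)).1 hmod
  have hle : n ≤ t + 1 - (s + 1) := Nat.le_of_dvd (by lia) hdvd
  lia

end

theorem zero_band_MDS_generator_matrix_exists_general {R : Type*} [CommRing R] {n : ℕ} [NeZero n]
    (k : ℕ) (a : Fin n → R) (ha : Pairwise fun i j ↦ IsRegular (a i - a j)) :
    ∃ Z : Matrix (Fin k) (Fin n) R,
      (∀ (i : Fin k) (j : Fin n),
          (∃ s : ℕ, 1 ≤ s ∧ s ≤ k - 1 ∧ (j : ℕ) = ((i : ℕ) + s) % n) → Z i j = 0) ∧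
      (∀ cols : Finset (Fin n), cols.card = k →
          LinearIndependent R (fun j : cols => fun u => Z u (j : Fin n))) :=
  ⟨zeroBandMatrix a k, fun _ _ ⟨_, hs, hsk, hj⟩ ↦ zeroBandMatrix_apply_eq_zero a hs hsk hj,
    fun _ hcols ↦ linearIndependent_zeroBandMatrix_col ha hcols⟩

/-- Over any finite field `F` with `|F| ≥ n`, for all
`1 ≤ k ≤ n`, a `k × n` zero-band MDS generator matrix exists: a matrix with
zeros on the prescribed band whose every `k` columns are linearly
independent. -/
theorem zero_band_MDS_generator_matrix_exists
    (F : Type*) [Field F] [Fintype F] (k n : ℕ) (hk : 1 ≤ k) (hkn : k ≤ n)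
    (hF : n ≤ Fintype.card F) :
    ∃ Z : Matrix (Fin k) (Fin n) F,
      (∀ (i : Fin k) (j : Fin n),
          (∃ s : ℕ, 1 ≤ s ∧ s ≤ k - 1 ∧ (j : ℕ) = ((i : ℕ) + s) % n) → Z i j = 0) ∧
      (∀ cols : Finset (Fin n), cols.card = k →
          LinearIndependent F (fun j : cols => fun u => Z u (j : Fin n))) := by
  have : NeZero n := .of_pos (hk.trans hkn)
  obtain ⟨a⟩ : Nonempty (Fin n ↪ F) := Function.Embedding.nonempty_of_card_le (by simpa using hF)
  exact zero_band_MDS_generator_matrix_exists_general k a fun i j hij ↦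
    .of_ne_zero (sub_ne_zero.2 (a.injective.ne hij))
end

section
/- Fix integers a ≥ 1, g ≥ 0, ℓ ≥ 1, m ≥ 1, and set τ = m(a+g)+a−1, M = m+ℓ, n = Ma, N = (M−1)(a+g)+a. Let σ(j) = ⌊j/a⌋·(a+g) + (j mod a) for j ∈ {0,…,n−1} (the increasing enumeration of the placement set S), define f_S(j) = max{i ∈ {0,…,n−1} : σ(i) ≤ j} for j ∈ {0,…,N−1}, and r_i = f_S(min{σ(i)+τ, N−1}). Then for every j ∈ {0,…,m+ℓ−1}: r_{ja} = (j+m+1)a − 1 if j < ℓ, and r_{ja} = (m+ℓ)a − 1 if j ≥ ℓ. -/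
/-!
Since `σ(i) = i + ⌊i/a⌋ g`, the map `σ` is strictly increasing, and hence `f_S` is a left inverse
of `σ`. Both `σ(ja) + τ` and `N − 1` are final positions of blocks: they are the `σ`-images of
`(j+m+1)a − 1` and `(m+ℓ)a − 1`. As `σ` commutes with minima, `r_{ja}` is the smaller of these two
indices.
-/

/-- The enumeration `σ` of the placement set: blocks of `a` consecutive positions, separated by
gaps of length `g`. It is defined on all of `ℕ`, the placement set being the image of an initial
segment. -/
def placement (a g i : ℕ) : ℕ :=
  i / a * (a + g) + i % a

/-- The function `f_S` of the placement set with `M` blocks: the largest of the `M * a` indices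
whose placement is at most `x`. -/
def lastPlacedIndex (a g M x : ℕ) : ℕ :=
  Nat.findGreatest (fun i ↦ placement a g i ≤ x) (M * a - 1)

/-- The index `r_i` of the furthest code symbol accessible for the recovery of the `i`-th one, for
`M` blocks and the delay `τ = m * (a + g) + a - 1`. -/
def furthestAccessibleIndex (a g m M i : ℕ) : ℕ :=
  lastPlacedIndex a g M
    (min (placement a g i + (m * (a + g) + a - 1)) ((M - 1) * (a + g) + a - 1))

theorem findGreatest_apply_le_apply_of_strictMono {α : Type*} [LinearOrder α] {f : ℕ → α}
    (hf : StrictMono f) {k n : ℕ} (hk : k ≤ n) :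
    Nat.findGreatest (fun i ↦ f i ≤ f k) n = k := by
  simp only [hf.le_iff_le]
  exact Nat.findGreatest_eq_iff.2 ⟨hk, fun _ ↦ le_rfl, fun _ hi _ ↦ hi.not_ge⟩

theorem placement_eq_add_div_mul (a g i : ℕ) : placement a g i = i + i / a * g :=
  calc i / a * (a + g) + i % a
    _ = i / a * a + i % a + i / a * g := by ring
    _ = i + i / a * g := by rw [Nat.div_add_mod']

theorem placement_strictMono (a g : ℕ) : StrictMono (placement a g) := by
  intro i k hik
  simp only [placement_eq_add_div_mul]
  exact add_lt_add_of_lt_of_le hik (by gcongr)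

section

variable {a : ℕ} (g : ℕ)

theorem placement_mul_add (K : ℕ) {s : ℕ} (hs : s < a) :
    placement a g (K * a + s) = K * (a + g) + s := by
  have hdiv : (K * a + s) / a = K := by
    rw [mul_comm, Nat.mul_add_div (Nat.zero_lt_of_lt hs), Nat.div_eq_of_lt hs, add_zero]
  rw [placement_eq_add_div_mul, hdiv]
  ring

theorem placement_mul (ha : 0 < a) (K : ℕ) : placement a g (K * a) = K * (a + g) :=
  placement_mul_add g K ha

theorem placement_succ_mul_sub_one (ha : 0 < a) (K : ℕ) :
    placement a g ((K + 1) * a - 1) = K * (a + g) + a - 1 := by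
  rw [add_one_mul, Nat.add_sub_assoc ha, placement_mul_add g K (Nat.sub_one_lt_of_lt ha),
    Nat.add_sub_assoc ha]

theorem lastPlacedIndex_placement {k M : ℕ} (hk : k ≤ M * a - 1) :
    lastPlacedIndex a g M (placement a g k) = k :=
  findGreatest_apply_le_apply_of_strictMono (placement_strictMono a g) hk

theorem furthestAccessibleIndex_mul (ha : 0 < a) {M : ℕ} (hM : 0 < M) (m j : ℕ) :
    furthestAccessibleIndex a g m M (j * a) = min ((j + m + 1) * a - 1) (M * a - 1) := by
  have delayed : placement a g (j * a) + (m * (a + g) + a - 1)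
      = placement a g ((j + m + 1) * a - 1) := by
    rw [placement_mul g ha, placement_succ_mul_sub_one g ha, add_mul]
    omega
  have last : (M - 1) * (a + g) + a - 1 = placement a g (M * a - 1) := by
    rw [← placement_succ_mul_sub_one g ha, Nat.sub_add_cancel hM]
  rw [furthestAccessibleIndex, delayed, last, ← (placement_strictMono a g).monotone.map_min,
    lastPlacedIndex_placement g (min_le_right _ _)]

end

/-- With `τ = m(a+g)+a−1`, `M = m+ℓ`, `n = Ma`,
`N = (M−1)(a+g)+a`, `σ(j) = (j/a)(a+g) + (j mod a)` the increasing enumeration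
of the placement set, `f_S(j) = max{i ≤ n−1 : σ(i) ≤ j}` and
`r_i = f_S(min{σ(i)+τ, N−1})`, one has, for all `j ≤ m+ℓ−1`:
`r_{ja} = (j+m+1)a−1` if `j < ℓ`, and `r_{ja} = (m+ℓ)a−1` if `j ≥ ℓ`. -/
theorem r_ja_formula
    (a g ℓ m : ℕ) (ha : 1 ≤ a) (hℓ : 1 ≤ ℓ) (hm : 1 ≤ m) :
    ∀ j : ℕ, j ≤ m + ℓ - 1 →
      (fun i : ℕ =>
          Nat.findGreatest
            (fun i' : ℕ => (i' / a) * (a + g) + i' % a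
              ≤ min ((i / a) * (a + g) + i % a + (m * (a + g) + a - 1))
                    ((m + ℓ - 1) * (a + g) + a - 1))
            ((m + ℓ) * a - 1)) (j * a)
        = if j < ℓ then (j + m + 1) * a - 1 else (m + ℓ) * a - 1 := by
  intro j _
  change furthestAccessibleIndex a g m (m + ℓ) (j * a) = _
  rw [furthestAccessibleIndex_mul g ha (by omega)]
  split_ifs with hj
  · have : j + m + 1 ≤ m + ℓ := by omega
    exact min_eq_left (by gcongr)
  · have : m + ℓ ≤ j + m + 1 := by omega
    exact min_eq_right (by gcongr)
end

section
/- Let a ≥ 1, ℓ ≥ 2, m ≥ ℓ, ρ = (m+1)a, r = ℓa, n = (m+ℓ)a. Let F be a field, Z = [Z1 | Z2] an a×2a zero-band MDS generator matrix over F, C an r×(ρ−r) super-regular matrix over F, and H the r×n parity-check matrix of C_{a,r,ρ} from Construction 1. Then any set of a columns of H whose indices lie in {(ℓ−1)a, (ℓ−1)a+1, …, (m+ℓ)a−1} is linearly independent. -/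
/-- The parity-check matrix `H` of the code `C_{a,r,ρ}` of Construction 1
(with `r = ℓa`): `H(0:a−1, 0:a−1) = I_a`; `H(ia:ia+a−1, ia:ia+a−1) = Z1` for
`i ∈ {1,…,ℓ−1}`; `H(0:r−1, r:ρ−1) = C`;
`H(ia:ia+a−1, ρ+(i−1)a:ρ+ia−1) = Z2` for `i ∈ {1,…,ℓ−1}`; all other entries
zero. -/
def constructionOneH (F : Type*) [Field F] (a ℓ ρ : ℕ) (ha : 0 < a)
    (Z1 Z2 : Matrix (Fin a) (Fin a) F)
    (C : Matrix (Fin (ℓ * a)) (Fin (ρ - ℓ * a)) F) :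
    Matrix (Fin (ℓ * a)) (Fin (ρ - a + ℓ * a)) F :=
  Matrix.of fun u v =>
    if hv1 : (v : ℕ) < ℓ * a then
      if (u : ℕ) / a = (v : ℕ) / a then
        if (v : ℕ) < a then (if (u : ℕ) = (v : ℕ) then 1 else 0)
        else Z1 ⟨(u : ℕ) % a, Nat.mod_lt _ ha⟩ ⟨(v : ℕ) % a, Nat.mod_lt _ ha⟩
      else 0
    else if hv2 : (v : ℕ) < ρ then
      C u ⟨(v : ℕ) - ℓ * a, by omega⟩
    else
      if (u : ℕ) / a = ((v : ℕ) - ρ) / a + 1 then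
        Z2 ⟨(u : ℕ) % a, Nat.mod_lt _ ha⟩ ⟨((v : ℕ) - ρ) % a, Nat.mod_lt _ ha⟩
      else 0

/-!
A linear relation of weight at most `a` between columns of `H` that avoid the identity block
involves, in the top `a` rows, only columns of `C`, and any `a` columns of the top `a × (ρ - r)`
block of `C` are independent; so the coefficients of the columns of `C` vanish. What remains is,
in the `i`-th block of rows, a relation of weight at most `a` between columns of `[Z1 | Z2]`,
and any `a` of those are independent too.
-/

open Function Matrix

section KwiseLinearIndependent

variable {R M ι κ : Type*} [Semiring R] [AddCommMonoid M] [Module R M] {k : ℕ} {v : ι → M}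

/-- Any `k` vectors of the family `v` are linearly independent. For the columns of a parity-check
matrix this says that the code has minimum distance greater than `k`. The condition is imposed on
index sets of size at most `k`, so that it is not vacuous for families with fewer than `k`
members. -/
def KwiseLinearIndependent (R : Type*) {M ι : Type*} [Semiring R] [AddCommMonoid M] [Module R M]
    (k : ℕ) (v : ι → M) : Prop :=
  ∀ s : Finset ι, s.card ≤ k → LinearIndepOn R v s

namespace KwiseLinearIndependent

theorem of_card_eq [Fintype ι] (hk : k ≤ Fintype.card ι)
    (h : ∀ s : Finset ι, s.card = k → LinearIndepOn R v s) : KwiseLinearIndependent R k v := by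
  intro s hs
  obtain ⟨t, hst, ht⟩ := Finset.exists_superset_card_eq hs hk
  exact (h t ht).mono (Finset.coe_subset.2 hst)

theorem comp (h : KwiseLinearIndependent R k v) {e : κ → ι} (he : Injective e) :
    KwiseLinearIndependent R k (v ∘ e) := by
  classical
  intro s hs
  refine LinearIndepOn.comp_of_image ?_ he.injOn
  rw [← Finset.coe_image]
  exact h _ (Finset.card_image_le.trans hs)

end KwiseLinearIndependent

end KwiseLinearIndependent

section Matrix

variable {R m m' n n' : Type*} [CommRing R] {k : ℕ}

theorem linearIndepOn_col_iff [Fintype n] {A : Matrix m n R} {s : Finset n} :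
    LinearIndepOn R A.col s ↔ ∀ x : n → R, (∀ j ∉ s, x j = 0) → A *ᵥ x = 0 → x = 0 := by
  classical
  have mulVec_eq (x : n → R) (hx : ∀ j ∉ s, x j = 0) : A *ᵥ x = ∑ j ∈ s, x j • A.col j := by
    rw [Finset.sum_subset s.subset_univ fun j _ hj => by rw [hx j hj, zero_smul]]
    simp [mulVec_eq_sum, Matrix.col]
  rw [linearIndepOn_finset_iff]
  refine ⟨fun h x hx hAx => funext fun j => ?_, fun h f hf j hj => ?_⟩
  · by_cases hj : j ∈ s
    · exact h x (mulVec_eq x hx ▸ hAx) j hj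
    · exact hx j hj
  · have hsupp : ∀ j ∉ s, (if j ∈ s then f j else 0) = 0 := fun j hj => if_neg hj
    have hrel : A *ᵥ (fun j => if j ∈ s then f j else 0) = 0 := by
      rw [mulVec_eq _ hsupp, ← hf]
      exact Finset.sum_congr rfl fun j hj => by rw [if_pos hj]
    simpa [hj] using congrFun (h _ hsupp hrel) j

theorem submatrix_mulVec_comp [Fintype n] [Fintype n'] {A : Matrix m n R} {x : n → R}
    {r : m' → m} {e : n' → n} (he : Injective e)
    (hout : ∀ i, ∀ j ∉ Set.range e, A (r i) j * x j = 0) :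
    A.submatrix r e *ᵥ (x ∘ e) = (A *ᵥ x) ∘ r := by
  funext i
  exact Fintype.sum_of_injective e he _ _ (hout i) fun _ => rfl

theorem KwiseLinearIndependent.comp_eq_zero_of_submatrix [Fintype n]
    {A : Matrix m n R} {r : m' → m} {e : n' → n}
    (h : KwiseLinearIndependent R k (A.submatrix r e).col) (he : Injective e)
    {s : Finset n} (hs : s.card ≤ k) {x : n → R} (hx : ∀ j ∉ s, x j = 0) (hAx : A *ᵥ x = 0)
    (hout : ∀ i, ∀ j ∉ Set.range e, A (r i) j * x j = 0) : x ∘ e = 0 := by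
  have := Fintype.ofInjective e he
  have hcard : (s.preimage e he.injOn).card ≤ k :=
    (Finset.card_le_card_of_injOn e (fun _ hj => Finset.mem_preimage.1 hj) he.injOn).trans hs
  refine linearIndepOn_col_iff.1 (h _ hcard) _
    (fun j hj => hx _ fun hmem => hj (Finset.mem_preimage.2 hmem)) ?_
  rw [submatrix_mulVec_comp he hout, hAx]
  rfl

theorem KwiseLinearIndependent.fromCols_col {a : ℕ} {Z : Matrix m (Fin (2 * a)) R}
    (hZ : KwiseLinearIndependent R k Z.col) {Z1 Z2 : Matrix m (Fin a) R}
    (hZ1 : ∀ i (j : Fin a), Z1 i j = Z i ⟨j, by omega⟩)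
    (hZ2 : ∀ i (j : Fin a), Z2 i j = Z i ⟨a + j, by omega⟩) :
    KwiseLinearIndependent R k (fromCols Z1 Z2).col := by
  let e : Fin a ⊕ Fin a ≃ Fin (2 * a) := finSumFinEquiv.trans (finCongr (two_mul a).symm)
  have hsub : fromCols Z1 Z2 = Z.submatrix id e := by
    ext i (j | j)
    exacts [hZ1 i j, hZ2 i j]
  rw [hsub]
  exact hZ.comp e.injective

/-- A matrix all of whose square submatrices are nonsingular. Row and column selections are
injective maps rather than increasing ones, which only changes the minors by a sign. -/
def IsSuperregular (A : Matrix m n R) : Prop :=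
  ∀ (s : ℕ) (ri : Fin s → m) (ci : Fin s → n), Injective ri → Injective ci →
    (A.submatrix ri ci).det ≠ 0

namespace IsSuperregular

variable {A : Matrix m n R}

theorem submatrix (hA : IsSuperregular A) {r : m' → m} {e : n' → n} (hr : Injective r)
    (he : Injective e) : IsSuperregular (A.submatrix r e) :=
  fun s _ _ hri hci => hA s _ _ (hr.comp hri) (he.comp hci)

theorem kwiseLinearIndependent_col [IsDomain R] [Fintype m] (hA : IsSuperregular A) :
    KwiseLinearIndependent R (Fintype.card m) A.col := by
  intro s hs
  obtain ⟨ri⟩ : Nonempty (Fin s.card ↪ m) := Embedding.nonempty_of_card_le (by simpa using hs)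
  let ci : Fin s.card → n := fun i => s.equivFin.symm i
  have hdet : (A.submatrix ri ci).det ≠ 0 :=
    hA _ ri ci ri.injective (Subtype.val_injective.comp s.equivFin.symm.injective)
  have hcols : LinearIndependent R (A.col ∘ ci) :=
    .of_comp (LinearMap.funLeft R R ri) (linearIndependent_cols_of_det_ne_zero hdet)
  exact (linearIndependent_equiv s.equivFin.symm).1 hcols

end IsSuperregular

end Matrix

section ConstructionOne

variable {F : Type*} [Field F] {a q ρ : ℕ}

theorem coe_finProdFinEquiv_div (i : Fin q) (j : Fin a) :
    (finProdFinEquiv (i, j) : ℕ) / a = i :=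
  congrArg (fun p => (p.1 : ℕ)) (finProdFinEquiv.symm_apply_apply (i, j))

theorem coe_finProdFinEquiv_mod (i : Fin q) (j : Fin a) :
    (finProdFinEquiv (i, j) : ℕ) % a = j :=
  congrArg (fun p => (p.2 : ℕ)) (finProdFinEquiv.symm_apply_apply (i, j))

/-- The row of `H` that is the `u`-th row of the `i`-th block of `a` rows. -/
def blockRow (i : Fin q) (u : Fin a) : Fin (q * a) :=
  finProdFinEquiv (i, u)

theorem blockRow_injective (i : Fin q) : Injective (blockRow i : Fin a → Fin (q * a)) :=
  finProdFinEquiv.injective.comp (Prod.mk_right_injective i)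

theorem IsSuperregular.kwiseLinearIndependent_col_blockRow {R n : Type*} [CommRing R]
    [IsDomain R] {C : Matrix (Fin (q * a)) n R} (hC : IsSuperregular C) (i : Fin q) :
    KwiseLinearIndependent R a (C.submatrix (blockRow i) id).col := by
  simpa using (hC.submatrix (blockRow_injective i) injective_id).kwiseLinearIndependent_col

/-- The column of `H` that holds the `c`-th column of `C`. The number `ℓ` of row blocks is
written `q + 1`, which makes it positive. -/
def cColumn (c : Fin (ρ - (q + 1) * a)) : Fin (ρ - a + (q + 1) * a) :=
  ⟨(q + 1) * a + c, by have := Nat.add_one_mul q a; omega⟩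

/-- The columns of `H` that hold `[Z1 | Z2]` in the row block `i + 1`, the two summands indexing
the columns of `Z1` and of `Z2`. -/
def bandColumn (i : Fin q) : Fin a ⊕ Fin a → Fin (ρ - a + (q + 1) * a)
  | .inl j => ⟨a + finProdFinEquiv (i, j), by have := Nat.add_one_mul q a; omega⟩
  | .inr j => ⟨ρ + finProdFinEquiv (i, j), by have := Nat.add_one_mul q a; omega⟩

theorem cColumn_injective : Injective (cColumn (a := a) (q := q) (ρ := ρ)) :=
  fun c d h => by simpa [cColumn, Fin.ext_iff] using h

theorem bandColumn_injective (hρ : (q + 1) * a ≤ ρ) (i : Fin q) :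
    Injective (bandColumn (a := a) (ρ := ρ) i) := by
  have hlt (j : Fin a) : a + (finProdFinEquiv (i, j) : ℕ) < ρ := by
    have := Nat.add_one_mul q a
    omega
  rintro (j | j) (j' | j') h <;> simp only [bandColumn, Fin.mk.injEq] at h
  · simpa [Fin.ext_iff] using h
  · exact absurd (hlt j) (by omega)
  · exact absurd (hlt j') (by omega)
  · simpa [Fin.ext_iff] using h

theorem mem_range_cColumn_or_mem_range_bandColumn {v : Fin (ρ - a + (q + 1) * a)}
    (hv : a ≤ (v : ℕ)) :
    v ∈ Set.range cColumn ∨ ∃ i, v ∈ Set.range (bandColumn i) := by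
  have hqa : (q + 1) * a = q * a + a := Nat.add_one_mul q a
  by_cases hZ1 : (v : ℕ) < (q + 1) * a
  · obtain ⟨⟨i, j⟩, hij⟩ := finProdFinEquiv.surjective (⟨v - a, by omega⟩ : Fin (q * a))
    exact .inr ⟨i, .inl j, Fin.ext <| by simp only [bandColumn, hij]; omega⟩
  by_cases hC : (v : ℕ) < ρ
  · exact .inl ⟨⟨v - (q + 1) * a, by omega⟩, Fin.ext <| by simp only [cColumn]; omega⟩
  · obtain ⟨⟨i, j⟩, hij⟩ := finProdFinEquiv.surjective (⟨v - ρ, by omega⟩ : Fin (q * a))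
    exact .inr ⟨i, .inr j, Fin.ext <| by simp only [bandColumn, hij]; omega⟩

variable (ha : 0 < a) (Z1 Z2 : Matrix (Fin a) (Fin a) F)
  (C : Matrix (Fin ((q + 1) * a)) (Fin (ρ - (q + 1) * a)) F)

theorem constructionOneH_cColumn (u : Fin ((q + 1) * a)) (c : Fin (ρ - (q + 1) * a)) :
    constructionOneH F a (q + 1) ρ ha Z1 Z2 C u (cColumn c) = C u c := by
  have hlt : (q + 1) * a + (c : ℕ) < ρ := by omega
  simp [constructionOneH, cColumn, hlt]

theorem constructionOneH_blockRow_bandColumn (hρ : (q + 1) * a ≤ ρ) (i' : Fin (q + 1))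
    (u : Fin a) (i : Fin q) (j : Fin a ⊕ Fin a) :
    constructionOneH F a (q + 1) ρ ha Z1 Z2 C (blockRow i' u) (bandColumn i j) =
      if i' = i.succ then fromCols Z1 Z2 u j else 0 := by
  have hqa : (q + 1) * a = q * a + a := Nat.add_one_mul q a
  have hsucc : i' = i.succ ↔ (i' : ℕ) = i + 1 := by simp [Fin.ext_iff]
  rcases j with j | j
  · have hlt : a + (finProdFinEquiv (i, j) : ℕ) < (q + 1) * a := by omega
    simp only [constructionOneH, of_apply, blockRow, bandColumn, dif_pos hlt,
      Nat.add_div_left _ ha, Nat.add_mod_left, coe_finProdFinEquiv_div, coe_finProdFinEquiv_mod,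
      Nat.not_lt.2 (Nat.le_add_right a _), if_false, fromCols_apply_inl, hsucc]
  · have hnlt : ¬ ρ + (finProdFinEquiv (i, j) : ℕ) < (q + 1) * a := by omega
    simp only [constructionOneH, of_apply, blockRow, bandColumn, dif_neg hnlt,
      Nat.not_lt.2 (Nat.le_add_right ρ _), dite_false, Nat.add_sub_cancel_left,
      coe_finProdFinEquiv_div, coe_finProdFinEquiv_mod, fromCols_apply_inr, hsucc]

theorem constructionOneH_submatrix_cColumn (i : Fin (q + 1)) :
    (constructionOneH F a (q + 1) ρ ha Z1 Z2 C).submatrix (blockRow i) cColumn =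
      C.submatrix (blockRow i) id := by
  ext u c
  exact constructionOneH_cColumn ha Z1 Z2 C _ c

theorem constructionOneH_submatrix_bandColumn (hρ : (q + 1) * a ≤ ρ) (i : Fin q) :
    (constructionOneH F a (q + 1) ρ ha Z1 Z2 C).submatrix (blockRow i.succ) (bandColumn i) =
      fromCols Z1 Z2 := by
  ext u j
  exact (constructionOneH_blockRow_bandColumn ha Z1 Z2 C hρ _ u i j).trans (if_pos rfl)

theorem constructionOneH_blockRow_bandColumn_of_ne (hρ : (q + 1) * a ≤ ρ) {i' : Fin (q + 1)}
    {i : Fin q} (hi : i' ≠ i.succ) (u : Fin a) (j : Fin a ⊕ Fin a) :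
    constructionOneH F a (q + 1) ρ ha Z1 Z2 C (blockRow i' u) (bandColumn i j) = 0 :=
  (constructionOneH_blockRow_bandColumn ha Z1 Z2 C hρ i' u i j).trans (if_neg hi)

variable {Z1 Z2 C}

theorem constructionOne_last_columns_linearIndependent_general {k : ℕ} (hρ : (q + 1) * a ≤ ρ)
    (hZ : KwiseLinearIndependent F k (fromCols Z1 Z2).col)
    (hC : KwiseLinearIndependent F k (C.submatrix (blockRow 0) id).col)
    {cols : Finset (Fin (ρ - a + (q + 1) * a))} (hcols : ∀ j ∈ cols, a ≤ (j : ℕ))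
    (hcard : cols.card ≤ k) :
    LinearIndepOn F (constructionOneH F a (q + 1) ρ ha Z1 Z2 C).col cols := by
  refine linearIndepOn_col_iff.2 fun x hx hHx => ?_
  have hxI (v : Fin (ρ - a + (q + 1) * a)) (hv : ¬ a ≤ (v : ℕ)) : x v = 0 :=
    hx v fun h => hv (hcols v h)
  have hxC : x ∘ cColumn = 0 := by
    rw [← constructionOneH_submatrix_cColumn ha Z1 Z2] at hC
    refine hC.comp_eq_zero_of_submatrix cColumn_injective hcard hx hHx fun u v hv => ?_
    by_cases hva : a ≤ (v : ℕ)
    · obtain ⟨i, j, rfl⟩ := (mem_range_cColumn_or_mem_range_bandColumn hva).resolve_left hv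
      rw [constructionOneH_blockRow_bandColumn_of_ne _ _ _ _ hρ i.succ_ne_zero.symm, zero_mul]
    · rw [hxI v hva, mul_zero]
  have hxZ (i : Fin q) : x ∘ bandColumn i = 0 := by
    rw [← constructionOneH_submatrix_bandColumn ha Z1 Z2 C hρ i] at hZ
    refine hZ.comp_eq_zero_of_submatrix (bandColumn_injective hρ i) hcard hx hHx fun u v hv => ?_
    by_cases hva : a ≤ (v : ℕ)
    · obtain ⟨c, rfl⟩ | ⟨i', j, rfl⟩ := mem_range_cColumn_or_mem_range_bandColumn hva
      · rw [show x (cColumn c) = 0 from congrFun hxC c, mul_zero]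
      · have hne : i.succ ≠ i'.succ := fun h => hv (Fin.succ_injective q h ▸ ⟨j, rfl⟩)
        rw [constructionOneH_blockRow_bandColumn_of_ne _ _ _ _ hρ hne, zero_mul]
    · rw [hxI v hva, mul_zero]
  funext v
  by_cases hva : a ≤ (v : ℕ)
  · obtain ⟨c, rfl⟩ | ⟨i, j, rfl⟩ := mem_range_cColumn_or_mem_range_bandColumn hva
    exacts [congrFun hxC c, congrFun (hxZ i) j]
  · exact hxI v hva

end ConstructionOne

/-- In Construction 1 with `ρ = (m+1)a`, `r = ℓa`, `ℓ ≥ 2`,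
`m ≥ ℓ`, any `a` columns of `H` with indices in `{(ℓ−1)a, …, (m+ℓ)a−1}` are
linearly independent. -/
theorem constructionOne_last_columns_linearIndependent
    (F : Type*) [Field F] (a ℓ m : ℕ)
    (ha : 1 ≤ a) (hℓ : 2 ≤ ℓ) (hm : ℓ ≤ m)
    (Z : Matrix (Fin a) (Fin (2 * a)) F)
    (hZband : ∀ (i : Fin a) (j : Fin (2 * a)),
        (∃ s : ℕ, 1 ≤ s ∧ s ≤ a - 1 ∧ (j : ℕ) = ((i : ℕ) + s) % (2 * a)) → Z i j = 0)
    (hZMDS : ∀ cols : Finset (Fin (2 * a)), cols.card = a →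
        LinearIndependent F (fun j : cols => fun u => Z u (j : Fin (2 * a))))
    (Z1 Z2 : Matrix (Fin a) (Fin a) F)
    (hZ1 : ∀ (i j : Fin a), Z1 i j = Z i ⟨(j : ℕ), by have := j.isLt; omega⟩)
    (hZ2 : ∀ (i j : Fin a), Z2 i j = Z i ⟨a + (j : ℕ), by have := j.isLt; omega⟩)
    (C : Matrix (Fin (ℓ * a)) (Fin ((m + 1) * a - ℓ * a)) F)
    (hC : ∀ (s : ℕ) (ri : Fin s → Fin (ℓ * a)) (ci : Fin s → Fin ((m + 1) * a - ℓ * a)),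
        Function.Injective ri → Function.Injective ci →
        (C.submatrix ri ci).det ≠ 0)
    (cols : Finset (Fin ((m + 1) * a - a + ℓ * a)))
    (hcols : ∀ j ∈ cols, (ℓ - 1) * a ≤ (j : ℕ))
    (hcard : cols.card = a) :
    LinearIndependent F
      (fun j : cols => fun u =>
        constructionOneH F a ℓ ((m + 1) * a) (by omega) Z1 Z2 C u
          (j : Fin ((m + 1) * a - a + ℓ * a))) := by
  obtain ⟨q, rfl⟩ : ∃ q, ℓ = q + 1 := ⟨ℓ - 1, by omega⟩
  have hZ : KwiseLinearIndependent F a Z.col :=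
    .of_card_eq (by rw [Fintype.card_fin]; omega) hZMDS
  exact constructionOne_last_columns_linearIndependent_general ha
    (Nat.mul_le_mul_right a (by omega)) (hZ.fromCols_col hZ1 hZ2)
    (IsSuperregular.kwiseLinearIndependent_col_blockRow hC 0)
    (fun j hj => (Nat.le_mul_of_pos_left a (by omega)).trans (hcols j hj)) hcard.le
end

section
/- Let a ≥ 1, ℓ ≥ 2, m ≥ ℓ, ρ = (m+1)a, r = ℓa, n = (m+ℓ)a. Let F be a field, Z = [Z1 | Z2] an a×2a zero-band MDS generator matrix over F, C an r×(ρ−r) super-regular matrix over F, and H the r×n parity-check matrix of C_{a,r,ρ} from Construction 1. Then for every j with (ℓ−1)a ≤ j and j + r − 1 ≤ (m+ℓ)a − 1, the r×r submatrix of H formed by the r consecutive columns indexed by {j, j+1, …, j+r−1} is invertible. -/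
/-!
By the zero-band condition `Z1` is lower and `Z2` is upper triangular, and by the MDS property both
are invertible. Call a column of `H` sparse if it does not come from `C`. A sparse column `c < r` is
supported in the rows `≥ c` with a unit in row `c`, and a sparse column `c ≥ ρ` is supported in the
rows `a, …, a + (c - ρ)` with a unit in row `a + (c - ρ)`. In a window of `r` consecutive columns
these pivot rows are distinct, the rows that are not pivots vanish on all sparse columns, and the
square submatrix of pivot rows and sparse columns is triangular for a suitable order. So the
determinant of the window is, up to sign, a product of unit pivots and a minor of `C`.
-/

section BlockDeterminants

variable {n R : Type*} [Fintype n] [DecidableEq n] [CommRing R]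

theorem isUnit_det_of_blockTriangular_injective {α : Type*} [LinearOrder α] {M : Matrix n n R}
    {b : n → α} (hM : M.BlockTriangular b) (hb : Function.Injective b)
    (hdiag : ∀ i, IsUnit (M i i)) : IsUnit M.det := by
  rw [hM.det, IsUnit.prod_iff]
  intro k hk
  obtain ⟨i, -, rfl⟩ := Finset.mem_image.mp hk
  have : Subsingleton {v // b v = b i} :=
    ⟨fun v w => Subtype.ext (hb (v.2.trans w.2.symm))⟩
  rw [Matrix.det_eq_elem_of_subsingleton _ ⟨i, rfl⟩]
  exact hdiag i

theorem isUnit_diag_of_isLowerTriangular [LinearOrder n] {M : Matrix n n R}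
    (hM : M.IsLowerTriangular) (hdet : IsUnit M.det) (i : n) : IsUnit (M i i) := by
  rw [Matrix.det_of_isLowerTriangular M hM] at hdet
  exact IsUnit.prod_univ_iff.mp hdet i

theorem isUnit_diag_of_isUpperTriangular [LinearOrder n] {M : Matrix n n R}
    (hM : M.IsUpperTriangular) (hdet : IsUnit M.det) (i : n) : IsUnit (M i i) := by
  rw [Matrix.det_of_isUpperTriangular hM] at hdet
  exact IsUnit.prod_univ_iff.mp hdet i

theorem isUnit_det_of_zero_block {M : Matrix n n R} {P : n → Prop} [DecidablePred P]
    {row : {v // P v} → n} (hrow : Function.Injective row)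
    (hzero : ∀ u ∉ Set.range row, ∀ v, P v → M u v = 0)
    (hblock : IsUnit (M.submatrix row (↑)).det)
    (hcompl : ∀ row' : {v // ¬P v} → n, Function.Injective row' →
      IsUnit (M.submatrix row' (↑)).det) :
    IsUnit M.det := by
  obtain ⟨σ, hσ⟩ := Equiv.Perm.exists_extending_pair (↑) row Subtype.val_injective hrow
  have hσ_compl : ∀ v, ¬P v → σ v ∉ Set.range row := by
    rintro v hv ⟨w, hw⟩
    have hwv : (w : n) = v := σ.injective ((hσ w).trans hw)
    exact hv (hwv ▸ w.2)
  have hdet := Matrix.twoBlockTriangular_det (M.submatrix σ id) P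
    fun u hu v hv => hzero (σ u) (hσ_compl u hu) v hv
  have htop : (M.submatrix σ id).toSquareBlockProp P = M.submatrix row (↑) := by
    ext u v
    exact congrArg (M · v) (hσ u)
  rw [Matrix.det_permute, htop] at hdet
  refine isUnit_of_mul_isUnit_right (hdet ▸ hblock.mul ?_)
  exact hcompl (fun v => σ v) (σ.injective.comp Subtype.val_injective)

end BlockDeterminants

/-- Super-regularity: every square submatrix is invertible. Square submatrices are indexed by
injections from `Fin s`, so rows and columns may be taken in any order. -/
def IsSuperRegular {m n R : Type*} [CommRing R] (C : Matrix m n R) : Prop :=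
  ∀ (s : ℕ) (row : Fin s → m) (col : Fin s → n),
    Function.Injective row → Function.Injective col → IsUnit (C.submatrix row col).det

theorem IsSuperRegular.isUnit_det_submatrix {m n ι R : Type*} [CommRing R] [Fintype ι]
    [DecidableEq ι] {C : Matrix m n R} (hC : IsSuperRegular C) {row : ι → m} {col : ι → n}
    (hrow : Function.Injective row) (hcol : Function.Injective col) :
    IsUnit (C.submatrix row col).det := by
  let e := (Fintype.equivFin ι).symm
  rw [← Matrix.det_submatrix_equiv_self e, Matrix.submatrix_submatrix]
  exact hC _ _ _ (hrow.comp e.injective) (hcol.comp e.injective)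

section Generators

/-- The maximum distance separable (MDS) property of a generator matrix: any as many columns as
there are rows are linearly independent. -/
def IsMDSGenerator {m n K : Type*} [Field K] [Fintype m] (Z : Matrix m n K) : Prop :=
  ∀ cols : Finset n, cols.card = Fintype.card m →
    LinearIndependent K fun j : cols => fun u => Z u (j : n)

theorem IsMDSGenerator.isUnit_det_submatrix {m n K : Type*} [Field K] [Fintype m] [DecidableEq m]
    {Z : Matrix m n K} (hZ : IsMDSGenerator Z) {col : m → n} (hcol : Function.Injective col) :
    IsUnit (Z.submatrix id col).det := by
  have hcard : (Finset.univ.map ⟨col, hcol⟩).card = Fintype.card m := Finset.card_map _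
  have hindep : LinearIndependent K (Z.submatrix id col).col :=
    (hZ _ hcard).comp (fun i => ⟨col i, by simp⟩) fun i k hik => hcol (congrArg Subtype.val hik)
  rwa [Matrix.linearIndependent_cols_iff_isUnit, Matrix.isUnit_iff_isUnit_det] at hindep

variable {R : Type*} {a : ℕ}

/-- The zero-band condition: row `i` of an `a × 2a` matrix vanishes in the `a - 1` columns that
follow column `i` cyclically. -/
def IsZeroBand [Zero R] (Z : Matrix (Fin a) (Fin (2 * a)) R) : Prop :=
  ∀ (i : Fin a) (j : Fin (2 * a)),
    (∃ s : ℕ, 1 ≤ s ∧ s ≤ a - 1 ∧ (j : ℕ) = ((i : ℕ) + s) % (2 * a)) → Z i j = 0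

/-- The half `Z1` of `Z = [Z1 | Z2]`. -/
def leftHalf (Z : Matrix (Fin a) (Fin (2 * a)) R) : Matrix (Fin a) (Fin a) R :=
  Z.submatrix id fun k => ⟨k, by omega⟩

/-- The half `Z2` of `Z = [Z1 | Z2]`. -/
def rightHalf (Z : Matrix (Fin a) (Fin (2 * a)) R) : Matrix (Fin a) (Fin a) R :=
  Z.submatrix id fun k => ⟨a + k, by omega⟩

theorem IsZeroBand.isLowerTriangular_leftHalf [Zero R] {Z : Matrix (Fin a) (Fin (2 * a)) R}
    (hZ : IsZeroBand Z) : (leftHalf Z).IsLowerTriangular := by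
  intro i k (hik : i < k)
  refine hZ i _ ⟨k - i, by omega, by omega, ?_⟩
  rw [Nat.mod_eq_of_lt (by omega)]
  dsimp only
  omega

theorem IsZeroBand.isUpperTriangular_rightHalf [Zero R] {Z : Matrix (Fin a) (Fin (2 * a)) R}
    (hZ : IsZeroBand Z) : (rightHalf Z).IsUpperTriangular := by
  intro i k (hki : k < i)
  refine hZ i _ ⟨a + k - i, by omega, by omega, ?_⟩
  rw [Nat.mod_eq_of_lt (by omega)]
  dsimp only
  omega

theorem IsMDSGenerator.isUnit_det_leftHalf {K : Type*} [Field K]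
    {Z : Matrix (Fin a) (Fin (2 * a)) K} (hZ : IsMDSGenerator Z) : IsUnit (leftHalf Z).det :=
  hZ.isUnit_det_submatrix fun i k hik => by simpa [Fin.ext_iff] using hik

theorem IsMDSGenerator.isUnit_det_rightHalf {K : Type*} [Field K]
    {Z : Matrix (Fin a) (Fin (2 * a)) K} (hZ : IsMDSGenerator Z) : IsUnit (rightHalf Z).det :=
  hZ.isUnit_det_submatrix fun i k hik => by simpa [Fin.ext_iff] using hik

end Generators

section Entries

variable {F : Type*} [Field F] {a ℓ ρ : ℕ} (ha : 0 < a) {Z1 Z2 : Matrix (Fin a) (Fin a) F}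
  {C : Matrix (Fin (ℓ * a)) (Fin (ρ - ℓ * a)) F}

theorem constructionOneH_apply_eq_zero_of_lt (hZ1 : Z1.IsLowerTriangular) {u : Fin (ℓ * a)}
    {c : Fin (ρ - a + ℓ * a)} (hc : (c : ℕ) < ℓ * a) (huc : (u : ℕ) < c) :
    constructionOneH F a ℓ ρ ha Z1 Z2 C u c = 0 := by
  simp only [constructionOneH, Matrix.of_apply, hc, dite_true]
  split_ifs with hdiv _ heq
  · exact absurd heq huc.ne
  · rfl
  · apply hZ1
    have hu := Nat.div_add_mod (u : ℕ) a
    have hc := Nat.div_add_mod (c : ℕ) a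
    rw [hdiv] at hu
    simp only [OrderDual.toDual_lt_toDual, Fin.mk_lt_mk]
    omega
  · rfl

theorem isUnit_constructionOneH_apply_of_eq (hZ1 : ∀ i, IsUnit (Z1 i i)) {u : Fin (ℓ * a)}
    {c : Fin (ρ - a + ℓ * a)} (huc : (u : ℕ) = c) :
    IsUnit (constructionOneH F a ℓ ρ ha Z1 Z2 C u c) := by
  have hc : (c : ℕ) < ℓ * a := huc ▸ u.isLt
  simp only [constructionOneH, Matrix.of_apply, huc, hc, dite_true, if_true]
  split_ifs
  · exact isUnit_one
  · exact hZ1 _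

theorem constructionOneH_apply_eq_zero_of_lt_of_le (hℓρ : ℓ * a ≤ ρ) {u : Fin (ℓ * a)}
    {c : Fin (ρ - a + ℓ * a)} (hc : ρ ≤ c) (hu : (u : ℕ) < a) :
    constructionOneH F a ℓ ρ ha Z1 Z2 C u c = 0 := by
  simp only [constructionOneH, Matrix.of_apply, hc.not_gt, (hℓρ.trans hc).not_gt, dite_false,
    Nat.div_eq_of_lt hu, (Nat.succ_ne_zero _).symm, if_false]

theorem constructionOneH_apply_eq_zero_of_gt (hZ2 : Z2.IsUpperTriangular) (hℓρ : ℓ * a ≤ ρ)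
    {u : Fin (ℓ * a)} {c : Fin (ρ - a + ℓ * a)} (hc : ρ ≤ c) (huc : a + (c - ρ) < (u : ℕ)) :
    constructionOneH F a ℓ ρ ha Z1 Z2 C u c = 0 := by
  simp only [constructionOneH, Matrix.of_apply, hc.not_gt, (hℓρ.trans hc).not_gt, dite_false]
  split_ifs with hdiv
  · apply hZ2
    have hu := Nat.div_add_mod (u : ℕ) a
    have hc := Nat.div_add_mod (c - ρ : ℕ) a
    rw [hdiv, mul_add, mul_one] at hu
    simp only [id, Fin.mk_lt_mk]
    omega
  · rfl

theorem isUnit_constructionOneH_apply_of_eq_add (hZ2 : ∀ i, IsUnit (Z2 i i)) (hℓρ : ℓ * a ≤ ρ)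
    {u : Fin (ℓ * a)} {c : Fin (ρ - a + ℓ * a)} (hc : ρ ≤ c) (huc : (u : ℕ) = a + (c - ρ)) :
    IsUnit (constructionOneH F a ℓ ρ ha Z1 Z2 C u c) := by
  simp only [constructionOneH, Matrix.of_apply, hc.not_gt, (hℓρ.trans hc).not_gt, dite_false, huc,
    Nat.add_div_left _ ha, Nat.add_mod_left, if_true]
  exact hZ2 _

theorem constructionOneH_apply_of_le_of_lt {u : Fin (ℓ * a)} {c : Fin (ρ - a + ℓ * a)}
    (hℓc : ℓ * a ≤ c) (hcρ : (c : ℕ) < ρ) :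
    constructionOneH F a ℓ ρ ha Z1 Z2 C u c = C u ⟨c - ℓ * a, by omega⟩ := by
  simp only [constructionOneH, Matrix.of_apply, hℓc.not_gt, hcρ, dite_false, dite_true]

end Entries

section Windows

/-- The square submatrix of an `r × n` matrix formed by its columns `j, …, j + r - 1`. -/
def consecutiveColumns {R : Type*} {r n : ℕ} (H : Matrix (Fin r) (Fin n) R) (j : ℕ)
    (hj : j + r ≤ n) : Matrix (Fin r) (Fin r) R :=
  H.submatrix id fun v => ⟨j + v, by omega⟩

/-- A column index of `H` outside the block `C`. -/
abbrev IsSparseColumn (r ρ c : ℕ) : Prop :=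
  c < r ∨ ρ ≤ c

/-- The row of the pivot of the sparse column `c` of `H`: the last row of its support if `ρ ≤ c`,
the first one otherwise. -/
def pivotRow (a r ρ c : ℕ) : ℕ :=
  if c < r then c else a + (c - ρ)

/-- The position of the sparse column `c` of `H` in an order that makes the pivot rows upper
triangular. The sign reverses the order of the columns `c < r`, where `H` is lower triangular. -/
def eliminationRank (r c : ℕ) : ℤ :=
  if c < r then -c else c

theorem eliminationRank_injective (r : ℕ) : Function.Injective (eliminationRank r) := by
  intro c d hcd
  grind [eliminationRank]

section Pivots

variable {a r ρ j : ℕ}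

/-- The map `pivotRow` on the sparse columns of the window `j, …, j + r - 1`. -/
def windowPivot (hρ : r + a ≤ ρ) (hj : j + r ≤ ρ - a + r)
    (v : {v : Fin r // IsSparseColumn r ρ (j + v)}) : Fin r :=
  ⟨pivotRow a r ρ (j + v), by grind [pivotRow]⟩

theorem windowPivot_injective (hρ : r + a ≤ ρ) (hj : j + r ≤ ρ - a + r) :
    Function.Injective (windowPivot hρ hj) := by
  rintro ⟨v, hv⟩ ⟨w, hw⟩ hvw
  have hval : pivotRow a r ρ (j + v) = pivotRow a r ρ (j + w) := congrArg Fin.val hvw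
  grind [pivotRow]

theorem mem_range_windowPivot_of_le (hρ : r + a ≤ ρ) (hj : j + r ≤ ρ - a + r) {u : Fin r}
    (hu : j ≤ u) : u ∈ Set.range (windowPivot hρ hj) :=
  ⟨⟨⟨u - j, by omega⟩, by grind⟩, by grind [windowPivot, pivotRow]⟩

theorem mem_range_windowPivot_of_le_add (hρ : r + a ≤ ρ) (hj : j + r ≤ ρ - a + r) {u v : Fin r}
    (hv : ρ ≤ j + v) (hau : a ≤ u) (huv : (u : ℕ) ≤ a + (j + v - ρ)) :
    u ∈ Set.range (windowPivot hρ hj) :=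
  ⟨⟨⟨ρ + (u - a) - j, by omega⟩, by grind⟩, by grind [windowPivot, pivotRow]⟩

end Pivots

variable {F : Type*} [Field F] {a ℓ ρ j : ℕ} (ha : 0 < a) {Z1 Z2 : Matrix (Fin a) (Fin a) F}
  {C : Matrix (Fin (ℓ * a)) (Fin (ρ - ℓ * a)) F}
  (hρ : ℓ * a + a ≤ ρ) (hj : j + ℓ * a ≤ ρ - a + ℓ * a)

theorem isUnit_consecutiveColumns_windowPivot (hZ1 : ∀ i, IsUnit (Z1 i i))
    (hZ2 : ∀ i, IsUnit (Z2 i i)) (v : {v : Fin (ℓ * a) // IsSparseColumn (ℓ * a) ρ (j + v)}) :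
    IsUnit (consecutiveColumns (constructionOneH F a ℓ ρ ha Z1 Z2 C) j hj
      (windowPivot hρ hj v) v) := by
  by_cases hv : j + (v : ℕ) < ℓ * a
  · exact isUnit_constructionOneH_apply_of_eq ha hZ1 (if_pos hv)
  · exact isUnit_constructionOneH_apply_of_eq_add ha hZ2 (by omega) (v.2.resolve_left hv)
      (if_neg hv)

theorem blockTriangular_consecutiveColumns_windowPivot (hZ1 : Z1.IsLowerTriangular)
    (hZ2 : Z2.IsUpperTriangular) :
    ((consecutiveColumns (constructionOneH F a ℓ ρ ha Z1 Z2 C) j hj).submatrix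
      (windowPivot hρ hj) (↑)).BlockTriangular fun v => eliminationRank (ℓ * a) (j + v) := by
  rintro ⟨v, hv⟩ ⟨w, hw⟩
    (hwv : eliminationRank (ℓ * a) (j + w) < eliminationRank (ℓ * a) (j + v))
  rcases hw with hw | hw
  · refine constructionOneH_apply_eq_zero_of_lt ha hZ1 hw ?_
    change pivotRow a (ℓ * a) ρ (j + v) < j + w
    -- If `ρ ≤ j + v`, the pivot row is `< j` because `v < ℓ * a ≤ ρ - a`.
    grind [pivotRow, eliminationRank]
  · refine constructionOneH_apply_eq_zero_of_gt ha hZ2 (by omega) hw ?_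
    change a + (j + w - ρ) < pivotRow a (ℓ * a) ρ (j + v)
    -- Ranks are positive on columns `≥ ρ` and nonpositive on columns `< ℓ * a`, so `ρ ≤ j + v`.
    grind [pivotRow, eliminationRank]

theorem consecutiveColumns_apply_eq_zero_of_notMem_range (hZ1 : Z1.IsLowerTriangular)
    (hZ2 : Z2.IsUpperTriangular) {u v : Fin (ℓ * a)} (hu : u ∉ Set.range (windowPivot hρ hj))
    (hv : IsSparseColumn (ℓ * a) ρ (j + v)) :
    consecutiveColumns (constructionOneH F a ℓ ρ ha Z1 Z2 C) j hj u v = 0 := by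
  rcases hv with hv | hv
  · have huj : (u : ℕ) < j := lt_of_not_ge (mt (mem_range_windowPivot_of_le hρ hj) hu)
    exact constructionOneH_apply_eq_zero_of_lt ha hZ1 hv (Nat.lt_add_right _ huj)
  · by_cases hau : a ≤ (u : ℕ)
    · have huv : a + (j + v - ρ) < (u : ℕ) :=
        lt_of_not_ge (mt (mem_range_windowPivot_of_le_add hρ hj hv hau) hu)
      exact constructionOneH_apply_eq_zero_of_gt ha hZ2 (by omega) hv huv
    · exact constructionOneH_apply_eq_zero_of_lt_of_le ha (by omega) hv (lt_of_not_ge hau)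

theorem IsSuperRegular.isUnit_det_consecutiveColumns_submatrix (hC : IsSuperRegular C)
    {row : {v : Fin (ℓ * a) // ¬IsSparseColumn (ℓ * a) ρ (j + v)} → Fin (ℓ * a)}
    (hrow : Function.Injective row) :
    IsUnit ((consecutiveColumns (constructionOneH F a ℓ ρ ha Z1 Z2 C) j hj).submatrix
      row (↑)).det := by
  let col (v : {v : Fin (ℓ * a) // ¬IsSparseColumn (ℓ * a) ρ (j + v)}) : Fin (ρ - ℓ * a) :=
    ⟨j + v - ℓ * a, by grind⟩
  have hcol : Function.Injective col := by
    rintro ⟨v, hv⟩ ⟨w, hw⟩ hvw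
    grind
  have hsub : (consecutiveColumns (constructionOneH F a ℓ ρ ha Z1 Z2 C) j hj).submatrix
      row (↑) = C.submatrix row col := by
    ext i v
    obtain ⟨hℓv, hvρ⟩ := not_or.mp v.2
    exact constructionOneH_apply_of_le_of_lt ha (not_lt.mp hℓv) (not_le.mp hvρ)
  exact hsub ▸ hC.isUnit_det_submatrix hrow hcol

end Windows

theorem constructionOne_consecutive_columns_invertible_general {F : Type*} [Field F]
    {a ℓ ρ j : ℕ} (ha : 0 < a) (hρ : ℓ * a + a ≤ ρ) {Z1 Z2 : Matrix (Fin a) (Fin a) F}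
    (hZ1 : Z1.IsLowerTriangular) (hZ1det : IsUnit Z1.det)
    (hZ2 : Z2.IsUpperTriangular) (hZ2det : IsUnit Z2.det)
    {C : Matrix (Fin (ℓ * a)) (Fin (ρ - ℓ * a)) F} (hC : IsSuperRegular C)
    (hj : j + ℓ * a ≤ ρ - a + ℓ * a) :
    IsUnit (consecutiveColumns (constructionOneH F a ℓ ρ ha Z1 Z2 C) j hj).det := by
  refine isUnit_det_of_zero_block (windowPivot_injective hρ hj)
    (fun u hu v hv => consecutiveColumns_apply_eq_zero_of_notMem_range ha hρ hj hZ1 hZ2 hu hv) ?_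
    fun row hrow => hC.isUnit_det_consecutiveColumns_submatrix ha hj hrow
  have hrank : Function.Injective fun v : {v : Fin (ℓ * a) // IsSparseColumn (ℓ * a) ρ (j + v)} =>
      eliminationRank (ℓ * a) (j + v) :=
    (eliminationRank_injective _).comp
      ((add_right_injective j).comp (Fin.val_injective.comp Subtype.val_injective))
  exact isUnit_det_of_blockTriangular_injective
    (blockTriangular_consecutiveColumns_windowPivot ha hρ hj hZ1 hZ2) hrank
    (isUnit_consecutiveColumns_windowPivot ha hρ hj (isUnit_diag_of_isLowerTriangular hZ1 hZ1det)
      (isUnit_diag_of_isUpperTriangular hZ2 hZ2det))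

/-- In Construction 1 with `ρ = (m+1)a`, `r = ℓa`, `ℓ ≥ 2`,
`m ≥ ℓ`, every `r × r` submatrix of `H` formed by `r` consecutive columns
indexed by `{j, …, j+r−1}` with `(ℓ−1)a ≤ j` and `j+r−1 ≤ (m+ℓ)a−1` is
invertible. -/
theorem constructionOne_consecutive_columns_invertible
    (F : Type*) [Field F] (a ℓ m : ℕ)
    (ha : 1 ≤ a) (hℓ : 2 ≤ ℓ) (hm : ℓ ≤ m)
    (Z : Matrix (Fin a) (Fin (2 * a)) F)
    (hZband : ∀ (i : Fin a) (j : Fin (2 * a)),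
        (∃ s : ℕ, 1 ≤ s ∧ s ≤ a - 1 ∧ (j : ℕ) = ((i : ℕ) + s) % (2 * a)) → Z i j = 0)
    (hZMDS : ∀ cols : Finset (Fin (2 * a)), cols.card = a →
        LinearIndependent F (fun j : cols => fun u => Z u (j : Fin (2 * a))))
    (Z1 Z2 : Matrix (Fin a) (Fin a) F)
    (hZ1 : ∀ (i j : Fin a), Z1 i j = Z i ⟨(j : ℕ), by have := j.isLt; omega⟩)
    (hZ2 : ∀ (i j : Fin a), Z2 i j = Z i ⟨a + (j : ℕ), by have := j.isLt; omega⟩)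
    (C : Matrix (Fin (ℓ * a)) (Fin ((m + 1) * a - ℓ * a)) F)
    (hC : ∀ (s : ℕ) (ri : Fin s → Fin (ℓ * a)) (ci : Fin s → Fin ((m + 1) * a - ℓ * a)),
        Function.Injective ri → Function.Injective ci →
        (C.submatrix ri ci).det ≠ 0) :
    ∀ (j : ℕ) (h1 : (ℓ - 1) * a ≤ j) (h2 : j + ℓ * a ≤ (m + ℓ) * a),
      IsUnit
        (Matrix.of fun (u v : Fin (ℓ * a)) =>
            constructionOneH F a ℓ ((m + 1) * a) (by omega) Z1 Z2 C u
              ⟨j + (v : ℕ), by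
                have := v.isLt
                have h3 : (m + 1) * a = m * a + a := by ring
                have h4 : (m + ℓ) * a = m * a + ℓ * a := by ring
                omega⟩).det := by
  intro j _ h2
  obtain rfl : Z1 = leftHalf Z := Matrix.ext hZ1
  obtain rfl : Z2 = rightHalf Z := Matrix.ext hZ2
  have hband : IsZeroBand Z := hZband
  have hMDS : IsMDSGenerator Z := fun cols hcols => hZMDS cols (hcols.trans (Fintype.card_fin a))
  have hsuper : IsSuperRegular C := fun s ri ci hri hci => (hC s ri ci hri hci).isUnit
  have hρ : ℓ * a + a ≤ (m + 1) * a := by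
    simpa only [add_one_mul] using Nat.add_le_add_right (Nat.mul_le_mul_right a hm) a
  have hj : j + ℓ * a ≤ (m + 1) * a - a + ℓ * a := by
    simpa only [add_mul, one_mul, Nat.add_sub_cancel] using h2
  exact constructionOne_consecutive_columns_invertible_general ha hρ
    hband.isLowerTriangular_leftHalf hMDS.isUnit_det_leftHalf
    hband.isUpperTriangular_rightHalf hMDS.isUnit_det_rightHalf hsuper hj
end
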